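/- Let f = η^4 on the upper half-plane. Then for every τ ∈ ℍ, the Schwarzian of any primitive of f satisfies (d/dτ)(f'(τ)/f(τ)) − (1/2)(f'(τ)/f(τ))² = (π²/18) E4(τ); in other words, any holomorphic h with h' = η^4 satisfies the Schwarz differential equation {h, τ} = 2 (π²/36) E4(τ). -/

import Mathlib

open Complex Filter Topology

noncomputable section

/-- The nome `q = e^{2πiτ}`. -/
def qq (τ : ℂ) : ℂ := Complex.exp (2 * Real.pi * Complex.I * τ)

/-- The Eisenstein series `E₄(τ) = 1 + 240 Σ_{n≥1} σ₃(n) qⁿ`. -/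
def E4 (τ : ℂ) : ℂ := 1 + 240 * ∑' n : ℕ, (∑ d ∈ (n + 1).divisors, (d : ℂ) ^ 3) * qq τ ^ (n + 1)

/-- The Eisenstein series `E₆(τ) = 1 − 504 Σ_{n≥1} σ₅(n) qⁿ`. -/
def E6 (τ : ℂ) : ℂ := 1 - 504 * ∑' n : ℕ, (∑ d ∈ (n + 1).divisors, (d : ℂ) ^ 5) * qq τ ^ (n + 1)

/-- The normalized elliptic modular function `J = E₄³ / (E₄³ − E₆²)`. -/
def J (τ : ℂ) : ℂ := E4 τ ^ 3 / (E4 τ ^ 3 - E6 τ ^ 2)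

/-- The Dedekind eta function `η(τ) = e^{πiτ/12} ∏_{n≥1} (1 − qⁿ)`. -/
def dedekindEta (τ : ℂ) : ℂ := Complex.exp (Real.pi * Complex.I * τ / 12) * ∏' n : ℕ, (1 - qq τ ^ (n + 1))

/-- The elliptic point `ρ = e^{2πi/3}`. -/
def rho : ℂ := Complex.exp (2 * Real.pi * Complex.I / 3)

open UpperHalfPlane hiding I
open EisensteinSeries Derivative MatrixGroups ModularForm Manifold Function OnePoint

/-- A function on `ℍ` given by a `q`-expansion tends at `i∞` to its constant coefficient. -/
lemma tendsto_atImInfty_of_hasSum_qExpansion {f : ℍ → ℂ} {c : ℕ → ℂ}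
    (hf : ∀ z : ℍ, HasSum (fun m ↦ c m • Periodic.qParam 1 z ^ m) (f z)) :
    Tendsto f atImInfty (𝓝 (c 0)) := by
  have hq : Tendsto (fun z : ℍ ↦ Periodic.qParam 1 z) atImInfty (𝓝 0) :=
    qParam_tendsto_atImInfty one_pos
  have hsum : Summable fun m ↦ ‖c m • Periodic.qParam 1 UpperHalfPlane.I ^ m‖ :=
    (hf UpperHalfPlane.I).summable.norm
  have hlim := tendsto_tsum_of_dominated_convergence (𝓕 := atImInfty)
    (f := fun (z : ℍ) m ↦ c m • Periodic.qParam 1 z ^ m)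
    (g := fun m ↦ c m • (0 : ℂ) ^ m) hsum (fun m ↦ (hq.pow m).const_smul (c m)) (by
      have hpos : (0 : ℝ) < ‖Periodic.qParam 1 UpperHalfPlane.I‖ :=
        norm_pos_iff.mpr (Periodic.qParam_ne_zero _)
      filter_upwards [(tendsto_zero_iff_norm_tendsto_zero.mp hq).eventually_lt_const hpos] with z hz m
      rw [norm_smul, norm_smul, norm_pow, norm_pow]
      gcongr)
  rw [tsum_eq_single 0 (by simp +contextual)] at hlim
  simp_rw [(hf _).tsum_eq] at hlim
  simpa using hlim

lemma tendsto_E2_atImInfty : Tendsto E2 atImInfty (𝓝 1) := by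
  have h := tendsto_atImInfty_of_hasSum_qExpansion (f := E2)
    (c := fun m ↦ if m = 0 then 1 else -24 * ArithmeticFunction.sigma 1 m) fun z ↦ by
      simpa only [Periodic.qParam, ofReal_one, div_one] using hasSum_qExpansion_E2 (z := z)
  simpa using h

lemma tendsto_E₄_atImInfty : Tendsto E₄ atImInfty (𝓝 1) := by
  have h := tendsto_atImInfty_of_hasSum_qExpansion (f := E₄) fun z ↦
    UpperHalfPlane.hasSum_qExpansion one_pos
      (SlashInvariantFormClass.periodic_comp_ofComplex E₄ one_mem_strictPeriods_SL)
      (ModularFormClass.holo E₄) (ModularFormClass.bdd_at_infty E₄) z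
  rwa [E_qExpansion_coeff_zero _ ⟨2, rfl⟩] at h

/-- If a holomorphic function on `ℍ` has a limit at `i∞`, then its derivative vanishes at `i∞`. -/
lemma isZeroAtImInfty_normalizedDerivOfComplex {f : ℍ → ℂ} (hf : MDiff f) {c : ℂ}
    (hlim : Tendsto f atImInfty (𝓝 c)) : IsZeroAtImInfty (normalizedDerivOfComplex f) := by
  have hsub : IsZeroAtImInfty fun z ↦ f z - c := by
    simpa [IsZeroAtImInfty, ZeroAtFilter] using hlim.sub_const c
  have hderiv : IsZeroAtImInfty fun z ↦ deriv (f ∘ ofComplex) z := by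
    rw [isZeroAtImInfty_iff] at hsub ⊢
    intro ε hε
    obtain ⟨A, hA⟩ := hsub ε hε
    refine ⟨max A 0 + 2, fun z hz ↦ ?_⟩
    have him : ∀ w ∈ Metric.closedBall (z : ℂ) 1, max A 0 < w.im := by
      intro w hw
      have h1 : |(w - z).im| ≤ 1 :=
        (abs_im_le_norm _).trans (by simpa [dist_eq_norm] using hw)
      have h2 := (abs_le.mp h1).1
      simp only [sub_im, coe_im] at h2
      linarith
    have hd : DifferentiableOn ℂ (f ∘ ofComplex) (Metric.closedBall (z : ℂ) 1) :=
      (UpperHalfPlane.mdifferentiable_iff.mp hf).mono fun w hw ↦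
        (le_max_right A 0).trans_lt (him w hw)
    have hball := norm_deriv_le_of_forall_mem_sphere_norm_le (c := (z : ℂ)) (R := 1) (C := ε)
      (f := fun w ↦ (f ∘ ofComplex) w - c) one_pos
      (((closure_ball (z : ℂ) one_ne_zero).symm ▸ hd).sub_const c).diffContOnCl (fun w hw ↦ by
        have hw' := him w (Metric.sphere_subset_closedBall hw)
        have hw0 : 0 < w.im := (le_max_right A 0).trans_lt hw'
        simpa [ofComplex_apply_of_im_pos hw0] using
          hA ⟨w, hw0⟩ ((le_max_left A 0).trans hw'.le))
    simpa [comp_def] using hball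
  have := Tendsto.const_mul (2 * Real.pi * I)⁻¹ hderiv
  rwa [mul_zero] at this

lemma normalizedDerivOfComplex_D2 (γ : SL(2, ℤ)) (z : ℍ) :
    normalizedDerivOfComplex (D2 γ) z = -(γ 1 0 / denom γ z) ^ 2 := by
  have hden := hasDerivAt_denom_zpow (γ : GL (Fin 2) ℝ) (-1) z
  have heq : (D2 γ ∘ ofComplex) =ᶠ[𝓝 (z : ℂ)]
      fun w ↦ (2 * Real.pi * I * γ 1 0) * denom γ w ^ (-1 : ℤ) := by
    filter_upwards [isOpen_upperHalfPlaneSet.mem_nhds z.im_pos] with w hw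
    simp [D2, ofComplex_apply_of_im_pos hw, div_eq_mul_inv]
  have hz := denom_ne_zero (γ : GL (Fin 2) ℝ) z
  rw [normalizedDerivOfComplex, ((hden.const_mul _).congr_of_eventuallyEq heq).deriv]
  norm_num [zpow_neg]
  field_simp [Real.pi_ne_zero]
  rw [I_sq, neg_one_mul]

lemma mdifferentiable_D2 (γ : SL(2, ℤ)) : MDiff (D2 γ) := by
  rw [UpperHalfPlane.mdifferentiable_iff]
  refine (DifferentiableOn.const_mul (b := 2 * Real.pi * I * γ 1 0)
    (fun w hw ↦ (hasDerivAt_denom_zpow (γ : GL (Fin 2) ℝ) (-1)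
      ⟨w, hw⟩).differentiableAt.differentiableWithinAt)).congr fun w hw ↦ ?_
  simp [D2, ofComplex_apply_of_im_pos hw, div_eq_mul_inv]

lemma E2_sq_sub_deriv_slash (γ : SL(2, ℤ)) :
    (E2 * E2 - (12 : ℂ) • normalizedDerivOfComplex E2) ∣[(4 : ℤ)] γ =
      E2 * E2 - (12 : ℂ) • normalizedDerivOfComplex E2 := by
  ext z
  have hD := congrFun (normalizedDerivOfComplex_SL_slash (k := 2) E2_mdifferentiable (γ := γ)) z
  rw [E2_slash_action, normalizedDerivOfComplex_sub _ _ E2_mdifferentiable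
    ((mdifferentiable_D2 γ).const_smul _),
    normalizedDerivOfComplex_smul _ _ (mdifferentiable_D2 γ)] at hD
  have hmul := congrFun (ModularForm.mul_slash_SL2 2 2 γ E2 E2) z
  rw [E2_slash_action] at hmul
  norm_num at hD hmul
  rw [sub_eq_add_neg, SlashAction.add_slash, SlashAction.neg_slash, ModularForm.SL_smul_slash]
  simp only [Pi.add_apply, Pi.neg_apply, Pi.smul_apply, Pi.mul_apply, smul_eq_mul]
  rw [hmul]
  rw [normalizedDerivOfComplex_D2, riemannZeta_two] at hD
  simp only [D2, riemannZeta_two] at hD ⊢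
  have hpi : (Real.pi : ℂ) ≠ 0 := by simp [Real.pi_ne_zero]
  have hz := denom_ne_zero (γ : GL (Fin 2) ℝ) z
  have hcocycle : ((Real.pi : ℂ) ^ 2 / 6)⁻¹ * (1 / 2) * (2 * Real.pi * I * γ 1 0 / denom γ z) =
      6 * I * (γ 1 0 / denom γ z) / Real.pi := by
    field_simp
  rw [hcocycle] at hD ⊢
  linear_combination 12 * hD - 36 * (γ 1 0 / denom γ z) ^ 2 / (Real.pi : ℂ) ^ 2 * I_sq

/-- Ramanujan's identity `D E₂ = (E₂² - E₄) / 12`. -/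
lemma E2_sq_sub_deriv_eq_E₄ (z : ℍ) :
    E2 z ^ 2 - 12 * normalizedDerivOfComplex E2 z = E₄ z := by
  let F : ℍ → ℂ := E2 * E2 - (12 : ℂ) • normalizedDerivOfComplex E2
  have hslash (γ : SL(2, ℤ)) : (F - ⇑E₄) ∣[(4 : ℤ)] γ = F - ⇑E₄ := by
    rw [sub_eq_add_neg, SlashAction.add_slash, SlashAction.neg_slash, E2_sq_sub_deriv_slash,
      show (⇑E₄ ∣[(4 : ℤ)] γ) = ⇑E₄ from E₄.slash_action_eq' _ ⟨γ, rfl⟩]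
  have hlim : Tendsto (F - ⇑E₄) atImInfty (𝓝 0) := by
    have h := ((tendsto_E2_atImInfty.mul tendsto_E2_atImInfty).sub
      (Tendsto.const_smul (isZeroAtImInfty_normalizedDerivOfComplex E2_mdifferentiable
        tendsto_E2_atImInfty) (12 : ℂ))).sub tendsto_E₄_atImInfty
    simp only [one_mul, smul_zero, sub_zero, sub_self] at h
    exact h
  let g : CuspForm 𝒮ℒ 4 :=
    { toFun := F - ⇑E₄
      slash_action_eq' := by
        rintro _ ⟨γ, rfl⟩
        exact hslash γ
      holo' := ((E2_mdifferentiable.mul E2_mdifferentiable).sub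
        ((normalizedDerivOfComplex_mdifferentiable E2_mdifferentiable).const_smul _)).sub E₄.holo'
      zero_at_cusps' := by
        intro c hc
        rw [Subgroup.IsArithmetic.isCusp_iff_isCusp_SL2Z] at hc
        rw [OnePoint.isZeroAt_iff_forall_SL2Z hc]
        intro γ _
        rw [hslash γ]
        exact hlim }
  have hg : g = 0 :=
    rank_zero_iff_forall_zero.mp (CuspForm.rank_eq_zero_of_weight_lt_twelve (by norm_num)) g
  have := DFunLike.congr_fun hg z
  change E2 z * E2 z - 12 * normalizedDerivOfComplex E2 z - E₄ z = 0 at this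
  linear_combination this

lemma E4_coe_eq_E₄ (z : ℍ) : E4 z = E₄ z := by
  rw [E4, EisensteinSeries.q_expansion_bernoulli _ ⟨2, rfl⟩]
  simp_rw [zpow_natCast]
  rw [tsum_pnat_eq_tsum_succ
    (f := fun n ↦ (ArithmeticFunction.sigma (4 - 1) n : ℂ) * cexp (2 * Real.pi * I * z) ^ n)]
  norm_num [show bernoulli 4 = -1 / 30 by decide +kernel, qq, ArithmeticFunction.sigma_apply]

lemma dedekindEta_eq_eta : dedekindEta = ModularForm.eta := by
  ext z
  simp only [dedekindEta, ModularForm.eta, qq, eta_q, Periodic.qParam]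
  congr 2
  · push_cast
    ring
  · simp

lemma deriv_eta_pow_four_div {z : ℂ} (hz : 0 < z.im) :
    deriv (fun w ↦ dedekindEta w ^ 4) z / dedekindEta z ^ 4 =
      Real.pi * I / 3 * (E2 ∘ ofComplex) z := by
  have hne : ModularForm.eta z ≠ 0 := eta_ne_zero hz
  have hlog := logDeriv_eta_eq_E2 ⟨z, hz⟩
  rw [logDeriv_apply, div_eq_iff hne] at hlog
  rw [dedekindEta_eq_eta,
    ((differentiableAt_eta_of_mem_upperHalfPlaneSet hz).hasDerivAt.fun_pow 4).deriv, hlog, comp_apply, ofComplex_apply_of_im_pos hz]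
  field_simp
  norm_num
  ring

/-- Any primitive `h` of `f = η⁴` satisfies the Schwarz equation
`{h,τ} = (f'/f)' − (1/2)(f'/f)² = 2·(π²/36)·E₄(τ)` on the upper half-plane. -/
theorem schwarzian_eta_four (τ : ℂ) (hτ : 0 < τ.im) :
    deriv (fun z : ℂ => deriv (fun w : ℂ => dedekindEta w ^ 4) z / dedekindEta z ^ 4) τ -
      1 / 2 * (deriv (fun w : ℂ => dedekindEta w ^ 4) τ / dedekindEta τ ^ 4) ^ 2 =
      (Real.pi : ℂ) ^ 2 / 18 * E4 τ := by
  have hderiv : deriv (fun z : ℂ => deriv (fun w : ℂ => dedekindEta w ^ 4) z / dedekindEta z ^ 4) τ =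
      Real.pi * I / 3 * deriv (E2 ∘ ofComplex) τ := by
    have heq : (fun z : ℂ => deriv (fun w : ℂ => dedekindEta w ^ 4) z / dedekindEta z ^ 4) =ᶠ[𝓝 τ]
        fun z ↦ Real.pi * I / 3 * (E2 ∘ ofComplex) z := by
      filter_upwards [isOpen_upperHalfPlaneSet.mem_nhds hτ] with z hz
      exact deriv_eta_pow_four_div hz
    rw [heq.deriv_eq, deriv_const_mul_field]
  have hR := E2_sq_sub_deriv_eq_E₄ ⟨τ, hτ⟩
  rw [← E4_coe_eq_E₄, normalizedDerivOfComplex] at hR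
  rw [hderiv, deriv_eta_pow_four_div hτ, ← hR, comp_apply, ofComplex_apply_of_im_pos hτ]
  have hpi : (Real.pi : ℂ) ≠ 0 := by simp [Real.pi_ne_zero]
  field_simp
  grind [I_sq]
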